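/- arXiv:2002.04842 — 3 statements merged into one kernel-verified Lean document; each statement's English description precedes it below -/
import Mathlib

section
/- Let (H, β) be a monoidal Hom-Hopf algebra and let σ : H ⊗ H → k be a normal left monoidal Hom-2-cocycle. Then H with the same unit and automorphism β and the new multiplication h ·_σ g = σ(h_1, g_1)β(h_2g_2) is a monoidal Hom-algebra (the left twist _σH of H). -/
open TensorProduct

/-! Basic notions of monoidal Hom-algebras, Hom-coalgebras, Hom-bialgebras and
Hom-Hopf algebras over a field `k`, following Caenepeel–Goyvaerts.  All Sweedler-type
identities are expressed via the tensor-product calculus of Mathlib. -/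

/-- A (unital) monoidal Hom-associative algebra `(A, α)`. -/
structure HomAlg (k : Type*) [Field k] (A : Type*) [AddCommGroup A] [Module k A] where
  mul : A →ₗ[k] A →ₗ[k] A
  one : A
  str : A ≃ₗ[k] A
  hom_assoc : ∀ a b c, mul (str a) (mul b c) = mul (mul a b) (str c)
  mul_one : ∀ a, mul a one = str a
  one_mul : ∀ a, mul one a = str a
  str_mul : ∀ a b, str (mul a b) = mul (str a) (str b)
  str_one : str one = one

/-- A (counital) monoidal Hom-coassociative coalgebra `(C, λ)`. -/
structure HomCoalg (k : Type*) [Field k] (C : Type*) [AddCommGroup C] [Module k C] where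
  comul : C →ₗ[k] C ⊗[k] C
  counit : C →ₗ[k] k
  str : C ≃ₗ[k] C
  hom_coassoc : ∀ c,
    TensorProduct.map str.symm.toLinearMap comul (comul c)
      = TensorProduct.assoc k C C C (TensorProduct.map comul str.symm.toLinearMap (comul c))
  counit_comul_right : ∀ c,
    TensorProduct.rid k C (TensorProduct.map LinearMap.id counit (comul c)) = str.symm c
  counit_comul_left : ∀ c,
    TensorProduct.lid k C (TensorProduct.map counit LinearMap.id (comul c)) = str.symm c
  comul_str : ∀ c, comul (str c) = TensorProduct.map str.toLinearMap str.toLinearMap (comul c)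
  counit_str : ∀ c, counit (str c) = counit c

/-- A monoidal Hom-bialgebra `(H, β)`. -/
structure HomBialg (k : Type*) [Field k] (H : Type*) [AddCommGroup H] [Module k H]
    extends HomAlg k H, HomCoalg k H where
  comul_mul : ∀ a b,
    comul (mul a b)
      = TensorProduct.map (TensorProduct.lift mul) (TensorProduct.lift mul)
          (TensorProduct.tensorTensorTensorComm k H H H H (comul a ⊗ₜ[k] comul b))
  comul_one : comul one = one ⊗ₜ[k] one
  counit_mul : ∀ a b, counit (mul a b) = counit a * counit b
  counit_one : counit one = 1

/-- A monoidal Hom-Hopf algebra `(H, β, S)`. -/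
structure HomHopf (k : Type*) [Field k] (H : Type*) [AddCommGroup H] [Module k H]
    extends HomBialg k H where
  S : H →ₗ[k] H
  S_str : ∀ h, str (S h) = S (str h)
  S_mul_left : ∀ h,
    TensorProduct.lift mul (TensorProduct.map S LinearMap.id (comul h)) = counit h • one
  S_mul_right : ∀ h,
    TensorProduct.lift mul (TensorProduct.map LinearMap.id S (comul h)) = counit h • one

section HomDefs

variable {k : Type*} [Field k] {A H M C T : Type*}
  [AddCommGroup A] [Module k A] [AddCommGroup H] [Module k H]
  [AddCommGroup M] [Module k M] [AddCommGroup C] [Module k C]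
  [AddCommGroup T] [Module k T]

/-- `(M, μ)` is a right `(A, α)`-Hom-module via `act`. -/
def IsRightHomModule (AA : HomAlg k A) (μ : M ≃ₗ[k] M) (act : M →ₗ[k] A →ₗ[k] M) : Prop :=
  (∀ m a b, act (act m a) (AA.str b) = act (μ m) (AA.mul a b)) ∧
  (∀ m, act m AA.one = μ m) ∧
  (∀ m a, μ (act m a) = act (μ m) (AA.str a))

/-- The monoidal Hom-algebra `(HM, β)` is a right `(A, α)`-Hom-module algebra via `act`. -/
def IsRightHomModuleAlg (AA : HomBialg k A) (HM : HomAlg k H)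
    (act : H →ₗ[k] A →ₗ[k] H) : Prop :=
  IsRightHomModule AA.toHomAlg HM.str act ∧
  (∀ h g a, act (HM.mul h g) a
      = TensorProduct.lift HM.mul (TensorProduct.map (act h) (act g) (AA.comul a))) ∧
  (∀ a, act HM.one a = AA.counit a • HM.one)

/-- `(M, μ)` is a left `(H, β)`-Hom-module via `act`. -/
def IsLeftHomModule (HHa : HomAlg k H) (μ : M ≃ₗ[k] M) (act : H →ₗ[k] M →ₗ[k] M) : Prop :=
  (∀ h g m, act (HHa.str h) (act g m) = act (HHa.mul h g) (μ m)) ∧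
  (∀ m, act HHa.one m = μ m) ∧
  (∀ h m, μ (act h m) = act (HHa.str h) (μ m))

/-- The monoidal Hom-algebra `(AM, α)` is a left `(H, β)`-Hom-module algebra via `act`. -/
def IsLeftHomModuleAlg (HB : HomBialg k H) (AM : HomAlg k A)
    (act : H →ₗ[k] A →ₗ[k] A) : Prop :=
  IsLeftHomModule HB.toHomAlg AM.str act ∧
  (∀ h a b, act h (AM.mul a b)
      = TensorProduct.lift AM.mul
          (TensorProduct.map (act.flip a) (act.flip b) (HB.comul h))) ∧
  (∀ h, act h AM.one = HB.counit h • AM.one)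

/-- `(M, μ)` is a left `(H, β)`-Hom-comodule via `ρ`. -/
def IsLeftHomComodule (HC : HomCoalg k H) (μ : M ≃ₗ[k] M) (ρ : M →ₗ[k] H ⊗[k] M) : Prop :=
  (∀ m, TensorProduct.map HC.str.symm.toLinearMap ρ (ρ m)
      = TensorProduct.assoc k H H M
          (TensorProduct.map HC.comul μ.symm.toLinearMap (ρ m))) ∧
  (∀ m, ρ (μ m) = TensorProduct.map HC.str.toLinearMap μ.toLinearMap (ρ m)) ∧
  (∀ m, TensorProduct.lid k M (TensorProduct.map HC.counit LinearMap.id (ρ m)) = μ.symm m)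

/-- The monoidal Hom-coalgebra `(CC, λ)` is a left `(H, β)`-Hom-comodule coalgebra via `ρ`. -/
def IsLeftHomComoduleCoalg (HB : HomBialg k H) (CC : HomCoalg k C)
    (ρ : C →ₗ[k] H ⊗[k] C) : Prop :=
  IsLeftHomComodule HB.toHomCoalg CC.str ρ ∧
  (∀ c, TensorProduct.map LinearMap.id CC.comul (ρ c)
      = TensorProduct.map (TensorProduct.lift HB.mul) LinearMap.id
          (TensorProduct.tensorTensorTensorComm k H C H C
            (TensorProduct.map ρ ρ (CC.comul c)))) ∧
  (∀ c, TensorProduct.rid k H (TensorProduct.map LinearMap.id CC.counit (ρ c))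
      = CC.counit c • HB.one)

/-- The monoidal Hom-algebra `(AM, α)` is a left `(H, β)`-Hom-comodule algebra via `ρ`. -/
def IsLeftHomComoduleAlg (HB : HomBialg k H) (AM : HomAlg k A)
    (ρ : A →ₗ[k] H ⊗[k] A) : Prop :=
  IsLeftHomComodule HB.toHomCoalg AM.str ρ ∧
  (∀ a b, ρ (AM.mul a b)
      = TensorProduct.map (TensorProduct.lift HB.mul) (TensorProduct.lift AM.mul)
          (TensorProduct.tensorTensorTensorComm k H A H A (ρ a ⊗ₜ[k] ρ b))) ∧
  ρ AM.one = HB.one ⊗ₜ[k] AM.one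

/-- `(M, μ)` is a right `(C, λ)`-Hom-comodule via `ρ`. -/
def IsRightHomComodule (CC : HomCoalg k C) (μ : M ≃ₗ[k] M) (ρ : M →ₗ[k] M ⊗[k] C) : Prop :=
  (∀ m, TensorProduct.map μ.symm.toLinearMap CC.comul (ρ m)
      = TensorProduct.assoc k M C C
          (TensorProduct.map ρ CC.str.symm.toLinearMap (ρ m))) ∧
  (∀ m, ρ (μ m) = TensorProduct.map μ.toLinearMap CC.str.toLinearMap (ρ m)) ∧
  (∀ m, TensorProduct.rid k M (TensorProduct.map LinearMap.id CC.counit (ρ m)) = μ.symm m)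

/-- The monoidal Hom-coalgebra `(CC, λ)` is a right `(A, α)`-Hom-comodule coalgebra via `ρ`. -/
def IsRightHomComoduleCoalg (AB : HomBialg k A) (CC : HomCoalg k C)
    (ρ : C →ₗ[k] C ⊗[k] A) : Prop :=
  IsRightHomComodule AB.toHomCoalg CC.str ρ ∧
  (∀ c, TensorProduct.map CC.comul LinearMap.id (ρ c)
      = TensorProduct.map LinearMap.id (TensorProduct.lift AB.mul)
          (TensorProduct.tensorTensorTensorComm k C A C A
            (TensorProduct.map ρ ρ (CC.comul c)))) ∧
  (∀ c, TensorProduct.lid k A (TensorProduct.map CC.counit LinearMap.id (ρ c))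
      = CC.counit c • AB.one)

/-- The monoidal Hom-algebra `(MM, μ)` is a right `(A, α)`-Hom-comodule algebra via `ρ`. -/
def IsRightHomComoduleAlg (AB : HomBialg k A) (MM : HomAlg k M)
    (ρ : M →ₗ[k] M ⊗[k] A) : Prop :=
  IsRightHomComodule AB.toHomCoalg MM.str ρ ∧
  (∀ m n, ρ (MM.mul m n)
      = TensorProduct.map (TensorProduct.lift MM.mul) (TensorProduct.lift AB.mul)
          (TensorProduct.tensorTensorTensorComm k M A M A (ρ m ⊗ₜ[k] ρ n))) ∧
  ρ MM.one = MM.one ⊗ₜ[k] AB.one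

/-- A matched copair `(A, H)` of monoidal Hom-bialgebras:
`A` is a left `H`-Hom-comodule algebra via `ρA : A → H ⊗ A`, `H` is a right
`A`-Hom-comodule algebra via `ρH : H → H ⊗ A`, subject to conditions (4.1)–(4.5). -/
def IsMatchedCopair (AB : HomBialg k A) (HB : HomBialg k H)
    (ρA : A →ₗ[k] H ⊗[k] A) (ρH : H →ₗ[k] H ⊗[k] A) : Prop :=
  IsLeftHomComoduleAlg HB AB.toHomAlg ρA ∧
  IsRightHomComoduleAlg AB HB.toHomAlg ρH ∧
  -- (4.1)
  (∀ a, TensorProduct.rid k H (TensorProduct.map LinearMap.id AB.counit (ρA a))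
      = AB.counit a • HB.one) ∧
  -- (4.2)
  (∀ a, TensorProduct.map LinearMap.id AB.comul (ρA a)
      = TensorProduct.map
          (TensorProduct.lift HB.mul ∘ₗ TensorProduct.map LinearMap.id HB.str.toLinearMap)
          ((TensorProduct.map
              (TensorProduct.lift AB.mul ∘ₗ TensorProduct.map AB.str.symm.toLinearMap LinearMap.id)
              LinearMap.id) ∘ₗ (TensorProduct.assoc k A A A).symm.toLinearMap)
          (TensorProduct.tensorTensorTensorComm k H A H (A ⊗[k] A)
            (TensorProduct.map LinearMap.id (TensorProduct.assoc k H A A).toLinearMap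
              (TensorProduct.map LinearMap.id (TensorProduct.map ρH LinearMap.id)
                (TensorProduct.map ρA ρA (AB.comul a)))))) ∧
  -- (4.3)
  (∀ h, TensorProduct.lid k A (TensorProduct.map HB.counit LinearMap.id (ρH h))
      = HB.counit h • AB.one) ∧
  -- (4.4)
  (∀ h, TensorProduct.map HB.comul LinearMap.id (ρH h)
      = TensorProduct.map
          ((TensorProduct.map LinearMap.id
              (TensorProduct.lift HB.mul ∘ₗ TensorProduct.map LinearMap.id HB.str.symm.toLinearMap))
            ∘ₗ (TensorProduct.assoc k H H H).toLinearMap)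
          (TensorProduct.lift AB.mul ∘ₗ TensorProduct.map AB.str.toLinearMap LinearMap.id)
          (TensorProduct.tensorTensorTensorComm k (H ⊗[k] H) A H A
            (TensorProduct.map (TensorProduct.assoc k H H A).symm.toLinearMap LinearMap.id
              (TensorProduct.map (TensorProduct.map LinearMap.id ρA) LinearMap.id
                (TensorProduct.map ρH ρH (HB.comul h)))))) ∧
  -- (4.5)
  (∀ h a, TensorProduct.map (TensorProduct.lift HB.mul) (TensorProduct.lift AB.mul)
        (TensorProduct.tensorTensorTensorComm k H A H A (ρH h ⊗ₜ[k] ρA a))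
      = TensorProduct.map (TensorProduct.lift HB.mul) (TensorProduct.lift AB.mul)
          (TensorProduct.tensorTensorTensorComm k H A H A (ρA a ⊗ₜ[k] ρH h)))

/-- A coquasitriangular structure `ζ` (with convolution inverse `ζi`) on a monoidal
Hom-bialgebra `P`; conditions (5.1)–(5.4). -/
def IsCoquasitriangular (P : HomBialg k T) (ζ ζi : T →ₗ[k] T →ₗ[k] k) : Prop :=
  -- convolution invertibility
  (∀ h g, TensorProduct.lid k k
      (TensorProduct.map (TensorProduct.lift ζ) (TensorProduct.lift ζi)
        (TensorProduct.tensorTensorTensorComm k T T T T (P.comul h ⊗ₜ[k] P.comul g)))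
      = P.counit h * P.counit g) ∧
  (∀ h g, TensorProduct.lid k k
      (TensorProduct.map (TensorProduct.lift ζi) (TensorProduct.lift ζ)
        (TensorProduct.tensorTensorTensorComm k T T T T (P.comul h ⊗ₜ[k] P.comul g)))
      = P.counit h * P.counit g) ∧
  -- (5.1)
  (∀ h g, ζ (P.str h) (P.str g) = ζ h g) ∧
  -- (5.2)
  (∀ h g, TensorProduct.lid k T
      (TensorProduct.map (TensorProduct.lift ζ)
        (TensorProduct.lift P.mul ∘ₗ (TensorProduct.comm k T T).toLinearMap)
        (TensorProduct.tensorTensorTensorComm k T T T T (P.comul h ⊗ₜ[k] P.comul g)))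
      = TensorProduct.rid k T
          (TensorProduct.map (TensorProduct.lift P.mul) (TensorProduct.lift ζ)
            (TensorProduct.tensorTensorTensorComm k T T T T (P.comul h ⊗ₜ[k] P.comul g)))) ∧
  -- (5.3)
  (∀ h g c, ζ (P.str.symm h) (P.mul g c)
      = TensorProduct.lid k k
          (TensorProduct.map (ζ.flip (P.str g)) (ζ.flip (P.str c)) (P.comul h))) ∧
  -- (5.4)
  (∀ h g c, ζ (P.mul h g) (P.str.symm c)
      = TensorProduct.lid k k
          (TensorProduct.map (ζ (P.str h)) (ζ (P.str g))
            ((TensorProduct.comm k T T) (P.comul c))))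

/-- `σ` is a left monoidal Hom-2-cocycle on the monoidal Hom-bialgebra `P`. -/
def IsLeftHom2Cocycle (P : HomBialg k T) (σ : T →ₗ[k] T →ₗ[k] k) : Prop :=
  (∀ h g, σ (P.str h) (P.str g) = σ h g) ∧
  (∀ h g c, TensorProduct.lid k k
      (TensorProduct.map (TensorProduct.lift σ) (σ.flip c ∘ₗ TensorProduct.lift P.mul)
        (TensorProduct.tensorTensorTensorComm k T T T T (P.comul h ⊗ₜ[k] P.comul g)))
      = TensorProduct.lid k k
          (TensorProduct.map (TensorProduct.lift σ) (σ h ∘ₗ TensorProduct.lift P.mul)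
            (TensorProduct.tensorTensorTensorComm k T T T T (P.comul g ⊗ₜ[k] P.comul c))))

/-- `σ` is a right monoidal Hom-2-cocycle on the monoidal Hom-bialgebra `P`. -/
def IsRightHom2Cocycle (P : HomBialg k T) (σ : T →ₗ[k] T →ₗ[k] k) : Prop :=
  (∀ h g, σ (P.str h) (P.str g) = σ h g) ∧
  (∀ h g c, TensorProduct.lid k k
      (TensorProduct.map (σ.flip c ∘ₗ TensorProduct.lift P.mul) (TensorProduct.lift σ)
        (TensorProduct.tensorTensorTensorComm k T T T T (P.comul h ⊗ₜ[k] P.comul g)))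
      = TensorProduct.lid k k
          (TensorProduct.map (σ h ∘ₗ TensorProduct.lift P.mul) (TensorProduct.lift σ)
            (TensorProduct.tensorTensorTensorComm k T T T T (P.comul g ⊗ₜ[k] P.comul c))))

/-- Normality of a 2-cocycle: `σ(1, h) = σ(h, 1) = ε(h)`. -/
def IsNormal2Cocycle (P : HomBialg k T) (σ : T →ₗ[k] T →ₗ[k] k) : Prop :=
  (∀ h, σ P.one h = P.counit h) ∧ (∀ h, σ h P.one = P.counit h)

/-- The left-twisted product `h ·_σ g = σ(h₁, g₁) β(h₂ g₂)`. -/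
noncomputable def leftTwistMul (P : HomBialg k T) (σ : T →ₗ[k] T →ₗ[k] k) (h g : T) : T :=
  TensorProduct.lid k T
    (TensorProduct.map (TensorProduct.lift σ) (P.str.toLinearMap ∘ₗ TensorProduct.lift P.mul)
      (TensorProduct.tensorTensorTensorComm k T T T T (P.comul h ⊗ₜ[k] P.comul g)))

/-- The right-twisted product `h ·_σ g = β(h₁ g₁) σ(h₂, g₂)`. -/
noncomputable def rightTwistMul (P : HomBialg k T) (σ : T →ₗ[k] T →ₗ[k] k) (h g : T) : T :=
  TensorProduct.rid k T
    (TensorProduct.map (P.str.toLinearMap ∘ₗ TensorProduct.lift P.mul) (TensorProduct.lift σ)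
      (TensorProduct.tensorTensorTensorComm k T T T T (P.comul h ⊗ₜ[k] P.comul g)))

/-- The convolution product on the linear dual of a monoidal Hom-coalgebra:
`(u • v)(h) = u(h₁) v(h₂)`. -/
noncomputable def convD (CC : HomCoalg k H) (u v : Module.Dual k H) : Module.Dual k H :=
  (TensorProduct.lid k k).toLinearMap ∘ₗ TensorProduct.map u v ∘ₗ CC.comul

end HomDefs

section Sweedler

variable {k : Type*} [Field k] {H V : Type*} [AddCommGroup H] [Module k H]
  [AddCommGroup V] [Module k V]

theorem sum_rot {X Y Z M : Type*} [AddCommMonoid M] (r : Finset X) (s : Finset Y)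
    (t : Finset Z) (f : X → Y → Z → M) :
    ∑ x ∈ r, ∑ y ∈ s, ∑ z ∈ t, f x y z = ∑ y ∈ s, ∑ z ∈ t, ∑ x ∈ r, f x y z := by
  rw [Finset.sum_comm]
  exact Finset.sum_congr rfl fun _ _ => Finset.sum_comm

theorem sum_dep {X Y M : Type*} [AddCommMonoid M] (r : Finset X) (r' : X → Finset X)
    (t : Finset Y) (t' : Y → Finset Y) (f : X → X → Y → Y → M) :
    ∑ x ∈ r, ∑ u ∈ r' x, ∑ y ∈ t, ∑ v ∈ t' y, f x u y v
      = ∑ y ∈ t, ∑ v ∈ t' y, ∑ x ∈ r, ∑ u ∈ r' x, f x u y v := by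
  calc _ = ∑ x ∈ r, ∑ y ∈ t, ∑ v ∈ t' y, ∑ u ∈ r' x, f x u y v := by
        refine Finset.sum_congr rfl fun x _ => ?_
        rw [Finset.sum_comm]
        exact Finset.sum_congr rfl fun _ _ => Finset.sum_comm
    _ = _ := by
        rw [Finset.sum_comm]
        exact Finset.sum_congr rfl fun _ _ => Finset.sum_comm

/-- A choice of Sweedler representations for all comultiplications. -/
def IsSweedler (P : HomBialg k H) (s : H → Finset (H × H)) : Prop :=
  ∀ a, P.comul a = ∑ p ∈ s a, p.1 ⊗ₜ[k] p.2

theorem sw_mul (P : HomBialg k H) {s : H → Finset (H × H)} (hs : IsSweedler P s)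
    (A : H →ₗ[k] k) (C : H →ₗ[k] V) (a b : H) :
    ∑ p ∈ s (P.mul a b), A p.1 • C p.2
      = ∑ p ∈ s a, ∑ q ∈ s b, A (P.mul p.1 q.1) • C (P.mul p.2 q.2) := by
  have h := congrArg ((TensorProduct.lid k V).toLinearMap ∘ₗ TensorProduct.map A C)
    (P.comul_mul a b)
  rw [hs, hs, hs] at h
  rw [Finset.sum_comm (s := s a)]
  simpa [TensorProduct.sum_tmul, TensorProduct.tmul_sum] using h

theorem sw_str (P : HomBialg k H) {s : H → Finset (H × H)} (hs : IsSweedler P s)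
    (A : H →ₗ[k] k) (C : H →ₗ[k] V) (a : H) :
    ∑ p ∈ s (P.str a), A p.1 • C p.2
      = ∑ p ∈ s a, A (P.str p.1) • C (P.str p.2) := by
  have h := congrArg ((TensorProduct.lid k V).toLinearMap ∘ₗ TensorProduct.map A C) (P.comul_str a)
  rw [hs, hs] at h
  simpa using h

theorem sw_one (P : HomBialg k H) {s : H → Finset (H × H)} (hs : IsSweedler P s)
    (A : H →ₗ[k] k) (C : H →ₗ[k] V) :
    ∑ p ∈ s P.one, A p.1 • C p.2 = A P.one • C P.one := by
  have h := congrArg ((TensorProduct.lid k V).toLinearMap ∘ₗ TensorProduct.map A C) P.comul_one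
  rw [hs] at h
  simpa using h

theorem sw_counit (P : HomBialg k H) {s : H → Finset (H × H)} (hs : IsSweedler P s)
    (C : H →ₗ[k] V) (a : H) :
    ∑ p ∈ s a, P.counit p.1 • C p.2 = C (P.str.symm a) := by
  have h := congrArg C (P.counit_comul_left a)
  rw [hs] at h
  simpa using h

theorem sw_coassoc (P : HomBialg k H) {s : H → Finset (H × H)} (hs : IsSweedler P s)
    (A B : H →ₗ[k] k) (C : H →ₗ[k] V) (a : H) :
    ∑ p ∈ s a, ∑ u ∈ s p.2, A p.1 • B u.1 • C u.2
      = ∑ p ∈ s a, ∑ u ∈ s p.1, A (P.str u.1) • B u.2 • C (P.str.symm p.2) := by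
  have h := congrArg ((TensorProduct.lid k V).toLinearMap ∘ₗ TensorProduct.map (A ∘ₗ P.str.toLinearMap)
    ((TensorProduct.lid k V).toLinearMap ∘ₗ TensorProduct.map B C)) (P.hom_coassoc a)
  rw [hs] at h
  simp only [map_sum, TensorProduct.map_tmul] at h
  have e : ∀ x, P.toHomCoalg.comul x = _ := hs
  simp only [e] at h
  simp only [smul_comm (A _) (B _)]
  simpa [TensorProduct.sum_tmul, TensorProduct.tmul_sum, Finset.smul_sum] using h

theorem sw_coassoc2 (P : HomBialg k H) {s : H → Finset (H × H)} (hs : IsSweedler P s)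
    (A B : H →ₗ[k] H →ₗ[k] k) (C : H →ₗ[k] H →ₗ[k] V) (a b : H) :
    ∑ p ∈ s a, ∑ q ∈ s b, ∑ u ∈ s p.2, ∑ v ∈ s q.2, A p.1 q.1 • B u.1 v.1 • C u.2 v.2
      = ∑ p ∈ s a, ∑ q ∈ s b, ∑ u ∈ s p.1, ∑ v ∈ s q.1,
          A (P.str u.1) (P.str v.1) • B u.2 v.2 • C (P.str.symm p.2) (P.str.symm q.2) := by
  calc _ = ∑ p ∈ s a, ∑ u ∈ s p.2, ∑ q ∈ s b, ∑ v ∈ s q.2,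
              A p.1 q.1 • B u.1 v.1 • C u.2 v.2 :=
        Finset.sum_congr rfl fun p _ => Finset.sum_comm
    _ = ∑ p ∈ s a, ∑ u ∈ s p.2, ∑ q ∈ s b, ∑ v ∈ s q.1,
              A p.1 (P.str v.1) • B u.1 v.2 • C u.2 (P.str.symm q.2) :=
        Finset.sum_congr rfl fun p _ => Finset.sum_congr rfl fun u _ =>
          sw_coassoc P hs (A p.1) (B u.1) (C u.2) b
    _ = ∑ q ∈ s b, ∑ v ∈ s q.1, ∑ p ∈ s a, ∑ u ∈ s p.2,
              A p.1 (P.str v.1) • B u.1 v.2 • C u.2 (P.str.symm q.2) := by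
        exact sum_dep (s a) (fun p => s p.2) (s b) (fun q => s q.1)
          fun p u q v => A p.1 (P.str v.1) • B u.1 v.2 • C u.2 (P.str.symm q.2)
    _ = ∑ q ∈ s b, ∑ v ∈ s q.1, ∑ p ∈ s a, ∑ u ∈ s p.1,
              A (P.str u.1) (P.str v.1) • B u.2 v.2 • C (P.str.symm p.2) (P.str.symm q.2) :=
        Finset.sum_congr rfl fun q _ => Finset.sum_congr rfl fun v _ =>
          sw_coassoc P hs (A.flip (P.str v.1)) (B.flip v.2) (C.flip (P.str.symm q.2)) a
    _ = _ := by
        rw [sum_dep (s b) (fun q => s q.1) (s a) (fun p => s p.1)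
          fun q v p u => A (P.str u.1) (P.str v.1) • B u.2 v.2 •
            C (P.str.symm p.2) (P.str.symm q.2)]
        exact Finset.sum_congr rfl fun p _ => Finset.sum_comm

theorem sw_cocycle (P : HomBialg k H) {s : H → Finset (H × H)} (hs : IsSweedler P s)
    {σ : H →ₗ[k] H →ₗ[k] k} (hσ : IsLeftHom2Cocycle P σ) (h g c : H) :
    ∑ p ∈ s h, ∑ q ∈ s g, σ p.1 q.1 * σ (P.mul p.2 q.2) c
      = ∑ p ∈ s g, ∑ q ∈ s c, σ p.1 q.1 * σ h (P.mul p.2 q.2) := by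
  have h := hσ.2 h g c
  rw [hs, hs, hs] at h
  rw [Finset.sum_comm, Finset.sum_comm (s := s g) (t := s c)]
  simpa [TensorProduct.sum_tmul, TensorProduct.tmul_sum] using h

theorem sw_twist (P : HomBialg k H) {s : H → Finset (H × H)} (hs : IsSweedler P s)
    (σ : H →ₗ[k] H →ₗ[k] k) (h g : H) :
    leftTwistMul P σ h g
      = ∑ p ∈ s h, ∑ q ∈ s g, σ p.1 q.1 • P.str (P.mul p.2 q.2) := by
  rw [leftTwistMul, hs, hs, Finset.sum_comm]
  simp [TensorProduct.sum_tmul, TensorProduct.tmul_sum]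

/-- The twisted product as a bilinear map. -/
noncomputable def twistBil (P : HomBialg k H) (σ : H →ₗ[k] H →ₗ[k] k) : H →ₗ[k] H →ₗ[k] H :=
  LinearMap.mk₂ k (leftTwistMul P σ)
    (by intros; simp [leftTwistMul, TensorProduct.add_tmul])
    (by intros; simp [leftTwistMul, ← TensorProduct.smul_tmul'])
    (by intros; simp [leftTwistMul, TensorProduct.tmul_add])
    (by intros; simp [leftTwistMul])

theorem sw_bil (P : HomBialg k H) {s : H → Finset (H × H)} (hs : IsSweedler P s)
    (σ : H →ₗ[k] H →ₗ[k] k) (h g : H) :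
    twistBil P σ h g
      = ∑ p ∈ s h, ∑ q ∈ s g, σ p.1 q.1 • P.str (P.mul p.2 q.2) :=
  sw_twist P hs σ h g

theorem twist_str (P : HomBialg k H) {s : H → Finset (H × H)} (hs : IsSweedler P s)
    {σ : H →ₗ[k] H →ₗ[k] k} (hσ : IsLeftHom2Cocycle P σ) (h g : H) :
    P.str (twistBil P σ h g) = twistBil P σ (P.str h) (P.str g) := by
  rw [sw_bil P hs, sw_bil P hs]
  calc _ = ∑ p ∈ s h, ∑ q ∈ s g, σ (P.str p.1) (P.str q.1) •
              P.str (P.mul (P.str p.2) (P.str q.2)) := by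
        simp [hσ.1, P.str_mul]
    _ = ∑ p ∈ s h, ∑ q ∈ s (P.str g), σ (P.str p.1) q.1 •
              P.str (P.mul (P.str p.2) q.2) :=
        Finset.sum_congr rfl fun p _ => (sw_str P hs (σ (P.str p.1))
          (P.str.toLinearMap ∘ₗ P.mul (P.str p.2)) g).symm
    _ = ∑ q ∈ s (P.str g), ∑ p ∈ s h, σ (P.str p.1) q.1 •
              P.str (P.mul (P.str p.2) q.2) := Finset.sum_comm
    _ = ∑ q ∈ s (P.str g), ∑ p ∈ s (P.str h), σ p.1 q.1 • P.str (P.mul p.2 q.2) :=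
        Finset.sum_congr rfl fun q _ => (sw_str P hs (σ.flip q.1)
          (P.str.toLinearMap ∘ₗ P.mul.flip q.2) h).symm
    _ = _ := Finset.sum_comm

theorem twist_one_right (P : HomBialg k H) {s : H → Finset (H × H)} (hs : IsSweedler P s)
    {σ : H →ₗ[k] H →ₗ[k] k} (hn : IsNormal2Cocycle P σ) (h : H) :
    twistBil P σ h P.one = P.str h := by
  rw [sw_bil P hs]
  calc _ = ∑ p ∈ s h, P.counit p.1 • (P.str.toLinearMap ∘ₗ P.str.toLinearMap) p.2 := by
        refine Finset.sum_congr rfl fun p _ => ?_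
        refine (sw_one P hs (σ p.1) (P.str.toLinearMap ∘ₗ P.mul p.2)).trans ?_
        simp [hn.2, P.mul_one]
    _ = _ := by rw [sw_counit P hs]; simp

theorem twist_one_left (P : HomBialg k H) {s : H → Finset (H × H)} (hs : IsSweedler P s)
    {σ : H →ₗ[k] H →ₗ[k] k} (hn : IsNormal2Cocycle P σ) (h : H) :
    twistBil P σ P.one h = P.str h := by
  rw [sw_bil P hs, Finset.sum_comm]
  calc _ = ∑ p ∈ s h, P.counit p.1 • (P.str.toLinearMap ∘ₗ P.str.toLinearMap) p.2 := by
        refine Finset.sum_congr rfl fun p _ => ?_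
        refine (sw_one P hs (σ.flip p.1) (P.str.toLinearMap ∘ₗ P.mul.flip p.2)).trans ?_
        simp [hn.1, P.one_mul]
    _ = _ := by rw [sw_counit P hs]; simp

theorem twist_left_expand (P : HomBialg k H) {s : H → Finset (H × H)} (hs : IsSweedler P s)
    {σ : H →ₗ[k] H →ₗ[k] k} (hσ : IsLeftHom2Cocycle P σ) (h g c : H) :
    twistBil P σ (P.str h) (twistBil P σ g c)
      = ∑ r ∈ s h, ∑ p ∈ s g, ∑ q ∈ s c,
        (∑ u ∈ s p.1, ∑ v ∈ s q.1, σ u.1 v.1 * σ r.1 (P.mul u.2 v.2)) •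
          P.str (P.str (P.mul r.2 (P.mul (P.str.symm p.2) (P.str.symm q.2)))) := by
  rw [sw_bil P hs σ g c]
  simp only [map_sum, map_smul, ← twist_str P hs hσ]
  calc _ = ∑ p ∈ s g, ∑ q ∈ s c, ∑ r ∈ s h, ∑ u ∈ s p.2, ∑ v ∈ s q.2,
            σ p.1 q.1 • σ r.1 (P.mul u.1 v.1) •
              P.str (P.str (P.mul r.2 (P.mul u.2 v.2))) := by
        refine Finset.sum_congr rfl fun p _ => Finset.sum_congr rfl fun q _ => ?_
        rw [sw_bil P hs]
        simp only [map_sum, map_smul, Finset.smul_sum]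
        refine Finset.sum_congr rfl fun r _ => ?_
        have := sw_mul P hs (σ r.1) (σ p.1 q.1 • (P.str.toLinearMap ∘ₗ P.str.toLinearMap ∘ₗ
          P.mul r.2)) p.2 q.2
        simpa [smul_comm (σ p.1 q.1)] using this
    _ = ∑ r ∈ s h, ∑ p ∈ s g, ∑ q ∈ s c, ∑ u ∈ s p.2, ∑ v ∈ s q.2,
            σ p.1 q.1 • σ r.1 (P.mul u.1 v.1) •
              P.str (P.str (P.mul r.2 (P.mul u.2 v.2))) := by
        exact (sum_rot _ _ _ _).symm
    _ = _ := by
        refine Finset.sum_congr rfl fun r _ => ?_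
        have := sw_coassoc2 P hs σ (P.mul.compr₂ (σ r.1))
          (P.mul.compr₂ (P.str.toLinearMap ∘ₗ P.str.toLinearMap ∘ₗ P.mul r.2)) g c
        simpa [hσ.1, Finset.sum_smul, mul_smul] using this

theorem twist_right_expand (P : HomBialg k H) {s : H → Finset (H × H)} (hs : IsSweedler P s)
    {σ : H →ₗ[k] H →ₗ[k] k} (hσ : IsLeftHom2Cocycle P σ) (h g c : H) :
    twistBil P σ (twistBil P σ h g) (P.str c)
      = ∑ q ∈ s c, ∑ r ∈ s h, ∑ p ∈ s g,
        (∑ u ∈ s r.1, ∑ v ∈ s p.1, σ u.1 v.1 * σ (P.mul u.2 v.2) q.1) •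
          P.str (P.str (P.mul (P.mul (P.str.symm r.2) (P.str.symm p.2)) q.2)) := by
  rw [sw_bil P hs σ h g]
  simp only [map_sum, map_smul, LinearMap.sum_apply, LinearMap.smul_apply, ← twist_str P hs hσ]
  calc _ = ∑ r ∈ s h, ∑ p ∈ s g, ∑ q ∈ s c, ∑ u ∈ s r.2, ∑ v ∈ s p.2,
            σ r.1 p.1 • σ (P.mul u.1 v.1) q.1 •
              P.str (P.str (P.mul (P.mul u.2 v.2) q.2)) := by
        refine Finset.sum_congr rfl fun r _ => Finset.sum_congr rfl fun p _ => ?_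
        rw [sw_bil P hs, Finset.sum_comm]
        simp only [map_sum, map_smul, Finset.smul_sum]
        refine Finset.sum_congr rfl fun q _ => ?_
        have := sw_mul P hs (σ.flip q.1) (σ r.1 p.1 • (P.str.toLinearMap ∘ₗ P.str.toLinearMap ∘ₗ
          P.mul.flip q.2)) r.2 p.2
        simpa [smul_comm (σ r.1 p.1)] using this
    _ = ∑ q ∈ s c, ∑ r ∈ s h, ∑ p ∈ s g, ∑ u ∈ s r.2, ∑ v ∈ s p.2,
            σ r.1 p.1 • σ (P.mul u.1 v.1) q.1 •
              P.str (P.str (P.mul (P.mul u.2 v.2) q.2)) := by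
        exact (sum_rot _ _ _ _).symm
    _ = _ := by
        refine Finset.sum_congr rfl fun q _ => ?_
        have := sw_coassoc2 P hs σ (P.mul.compr₂ (σ.flip q.1))
          (P.mul.compr₂ (P.str.toLinearMap ∘ₗ P.str.toLinearMap ∘ₗ P.mul.flip q.2)) h g
        simpa [hσ.1, Finset.sum_smul, mul_smul] using this

theorem twist_assoc (P : HomBialg k H) {s : H → Finset (H × H)} (hs : IsSweedler P s)
    {σ : H →ₗ[k] H →ₗ[k] k} (hσ : IsLeftHom2Cocycle P σ) (h g c : H) :
    twistBil P σ (P.str h) (twistBil P σ g c) = twistBil P σ (twistBil P σ h g) (P.str c) := by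
  rw [twist_left_expand P hs hσ, twist_right_expand P hs hσ]
  have e : ∀ x y z : H, P.mul x (P.mul (P.str.symm y) (P.str.symm z))
      = P.mul (P.mul (P.str.symm x) (P.str.symm y)) z := by
    intro x y z
    simpa using P.hom_assoc (P.str.symm x) (P.str.symm y) (P.str.symm z)
  simp only [← sw_cocycle P hs hσ, e]
  exact (sum_rot _ _ _ _).symm

end Sweedler

/-- If `σ` is a normal left monoidal Hom-2-cocycle on a monoidal
Hom-Hopf algebra `(H, β)`, then `H` with the twisted multiplication
`h ·_σ g = σ(h₁, g₁) β(h₂ g₂)` (and the same unit and structure map) is a monoidal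
Hom-algebra, the left twist `_σH`. -/
theorem left_twist_is_hom_algebra
    {k : Type*} [Field k] {H : Type*} [AddCommGroup H] [Module k H]
    (P : HomHopf k H) (σ : H →ₗ[k] H →ₗ[k] k)
    (hσ : IsLeftHom2Cocycle P.toHomBialg σ)
    (hnormal : IsNormal2Cocycle P.toHomBialg σ) :
    ∃ Q : HomAlg k H,
      Q.one = P.one ∧ Q.str = P.str ∧
      ∀ h g, Q.mul h g = leftTwistMul P.toHomBialg σ h g := by
  choose s hs using fun a => TensorProduct.exists_finset (P.comul a)
  have hs' : IsSweedler P.toHomBialg s := hs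
  exact ⟨{  mul := twistBil P.toHomBialg σ
            one := P.one
            str := P.str
            hom_assoc := twist_assoc _ hs' hσ
            mul_one := twist_one_right _ hs' hnormal
            one_mul := twist_one_left _ hs' hnormal
            str_mul := twist_str _ hs' hσ
            str_one := P.str_one }, rfl, rfl, fun _ _ => rfl⟩
end

section
/- Let (H, β) be a monoidal Hom-Hopf algebra and let σ : H ⊗ H → k be a normal right monoidal Hom-2-cocycle. Then H with the same unit and automorphism β and the new multiplication h ·_σ g = β(h_1g_1)σ(h_2, g_2) is a monoidal Hom-algebra (the right twist H_σ of H). -/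
open TensorProduct

section TwistHelpers

variable {k : Type*} [Field k] {H : Type*} [AddCommGroup H] [Module k H]

/-- Auxiliary map for the twisted product. -/
noncomputable def twR (P : HomBialg k H) (σ : H →ₗ[k] H →ₗ[k] k) :
    (H ⊗[k] H) ⊗[k] (H ⊗[k] H) →ₗ[k] H :=
  (TensorProduct.rid k H).toLinearMap ∘ₗ
    TensorProduct.map (TensorProduct.lift P.mul) (TensorProduct.lift σ) ∘ₗ
    (TensorProduct.tensorTensorTensorComm k H H H H).toLinearMap

/-- Auxiliary map for the twisted product. -/
noncomputable def twY (P : HomBialg k H) (σ : H →ₗ[k] H →ₗ[k] k) :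
    (H ⊗[k] (H ⊗[k] H)) ⊗[k] (H ⊗[k] (H ⊗[k] H)) →ₗ[k] H ⊗[k] H :=
  TensorProduct.map (TensorProduct.lift P.mul) (twR P σ) ∘ₗ
    (TensorProduct.tensorTensorTensorComm k H (H ⊗[k] H) H (H ⊗[k] H)).toLinearMap

theorem twR_tmul (P : HomBialg k H) (σ : H →ₗ[k] H →ₗ[k] k) (a b c d : H) :
    twR P σ ((a ⊗ₜ b) ⊗ₜ (c ⊗ₜ d)) = σ b d • P.mul a c := by
  simp [twR]

theorem twY_tmul (P : HomBialg k H) (σ : H →ₗ[k] H →ₗ[k] k) (a c : H) (s t : H ⊗[k] H) :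
    twY P σ ((a ⊗ₜ s) ⊗ₜ (c ⊗ₜ t)) = P.mul a c ⊗ₜ twR P σ (s ⊗ₜ t) := by
  simp [twY]

theorem rightTwistMul_eq (P : HomBialg k H) (σ : H →ₗ[k] H →ₗ[k] k) (h g : H) :
    rightTwistMul P σ h g = P.str (twR P σ (P.comul h ⊗ₜ P.comul g)) := by
  unfold rightTwistMul
  generalize P.comul h = s
  generalize P.comul g = t
  induction s with
  | zero => simp
  | add x y hx hy => simp only [TensorProduct.add_tmul, map_add, hx, hy]
  | tmul a b =>
    induction t with
    | zero => simp
    | add x y hx hy => simp only [TensorProduct.tmul_add, map_add, hx, hy]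
    | tmul c d => simp [twR_tmul]

theorem symm_mul (P : HomBialg k H) (a b : H) :
    P.str.symm (P.mul a b) = P.mul (P.str.symm a) (P.str.symm b) := by
  apply P.str.injective
  simp [P.str_mul]

theorem twR_str (P : HomBialg k H) (σ : H →ₗ[k] H →ₗ[k] k)
    (h1 : ∀ h g, σ (P.str h) (P.str g) = σ h g) (s t : H ⊗[k] H) :
    twR P σ (TensorProduct.map P.str.toLinearMap P.str.toLinearMap s ⊗ₜ
      TensorProduct.map P.str.toLinearMap P.str.toLinearMap t) = P.str (twR P σ (s ⊗ₜ t)) := by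
  induction s with
  | zero => simp
  | add x y hx hy => simp only [TensorProduct.add_tmul, map_add, hx, hy]
  | tmul a b =>
    induction t with
    | zero => simp
    | add x y hx hy => simp only [TensorProduct.tmul_add, map_add, hx, hy]
    | tmul c d => simp [twR_tmul, h1, P.str_mul]

theorem cocycle_twR (P : HomBialg k H) (σ : H →ₗ[k] H →ₗ[k] k)
    (h2 : IsRightHom2Cocycle P σ) (h g c : H) :
    σ (twR P σ (P.comul h ⊗ₜ P.comul g)) c = σ h (twR P σ (P.comul g ⊗ₜ P.comul c)) := by
  have h3 := h2.2 h g c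
  have e1 : ∀ z : (H ⊗[k] H) ⊗[k] (H ⊗[k] H), TensorProduct.lid k k
      (TensorProduct.map (σ.flip c ∘ₗ TensorProduct.lift P.mul) (TensorProduct.lift σ) z)
      = σ (TensorProduct.rid k H
        (TensorProduct.map (TensorProduct.lift P.mul) (TensorProduct.lift σ) z)) c := by
    intro z
    induction z with
    | zero => simp
    | add x y hx hy => simp only [map_add, hx, hy, LinearMap.add_apply]
    | tmul a b => simp [mul_comm]
  have e2 : ∀ z : (H ⊗[k] H) ⊗[k] (H ⊗[k] H), TensorProduct.lid k k
      (TensorProduct.map (σ h ∘ₗ TensorProduct.lift P.mul) (TensorProduct.lift σ) z)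
      = σ h (TensorProduct.rid k H
        (TensorProduct.map (TensorProduct.lift P.mul) (TensorProduct.lift σ) z)) := by
    intro z
    induction z with
    | zero => simp
    | add x y hx hy => simp only [map_add, hx, hy]
    | tmul a b => simp [mul_comm]
  rw [e1, e2] at h3
  simpa [twR] using h3

theorem comul_twR (P : HomBialg k H) (σ : H →ₗ[k] H →ₗ[k] k)
    (h1 : ∀ h g, σ (P.str h) (P.str g) = σ h g) (s t : H ⊗[k] H) :
    P.comul (twR P σ (s ⊗ₜ t)) =
      twY P σ (TensorProduct.assoc k H H H
          (TensorProduct.map P.comul P.str.symm.toLinearMap s) ⊗ₜ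
        TensorProduct.assoc k H H H
          (TensorProduct.map P.comul P.str.symm.toLinearMap t)) := by
  have hinv : ∀ h g, σ (P.str.symm h) (P.str.symm g) = σ h g := by
    intro h g
    rw [← h1]; simp
  induction s with
  | zero => simp
  | add x y hx hy => simp only [TensorProduct.add_tmul, map_add, hx, hy]
  | tmul a b =>
    induction t with
    | zero => simp
    | add x y hx hy => simp only [TensorProduct.tmul_add, map_add, hx, hy]
    | tmul c d =>
      rw [twR_tmul, map_smul, P.comul_mul]
      simp only [TensorProduct.map_tmul]
      generalize P.comul a = u
      generalize P.comul c = v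
      induction u with
      | zero => simp
      | add x y hx hy => simp only [TensorProduct.add_tmul, map_add, smul_add, hx, hy]
      | tmul p q =>
        induction v with
        | zero => simp
        | add x y hx hy =>
          simp only [TensorProduct.add_tmul, TensorProduct.tmul_add, map_add, smul_add, hx, hy]
        | tmul r w => simp [twY_tmul, twR_tmul, hinv]

theorem twR_assoc (P : HomBialg k H) (σ : H →ₗ[k] H →ₗ[k] k)
    (h2 : IsRightHom2Cocycle P σ) (s t u : H ⊗[k] H) :
    twR P σ (s ⊗ₜ twY P σ (TensorProduct.map P.str.symm.toLinearMap P.comul t ⊗ₜ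
        TensorProduct.map P.str.symm.toLinearMap P.comul u)) =
      twR P σ (twY P σ (TensorProduct.map P.str.symm.toLinearMap P.comul s ⊗ₜ
        TensorProduct.map P.str.symm.toLinearMap P.comul t) ⊗ₜ u) := by
  induction s with
  | zero => simp
  | add x y hx hy => simp only [TensorProduct.add_tmul, map_add, hx, hy]
  | tmul a b =>
    induction t with
    | zero => simp
    | add x y hx hy =>
      simp only [TensorProduct.add_tmul, TensorProduct.tmul_add, map_add, hx, hy]
    | tmul c d =>
      induction u with
      | zero => simp
      | add x y hx hy => simp only [TensorProduct.tmul_add, map_add, hx, hy]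
      | tmul e f =>
        simp only [TensorProduct.map_tmul, twY_tmul, twR_tmul, cocycle_twR P σ h2]
        have := P.hom_assoc (P.str.symm a) (P.str.symm c) (P.str.symm e)
        simp only [LinearEquiv.apply_symm_apply] at this
        simp only [LinearEquiv.coe_coe, this]

theorem twR_one_right (P : HomBialg k H) (σ : H →ₗ[k] H →ₗ[k] k)
    (hn : IsNormal2Cocycle P σ) (h : H) :
    twR P σ (P.comul h ⊗ₜ P.comul P.one) = h := by
  have h1 := congrArg P.str (P.counit_comul_right h)
  rw [LinearEquiv.apply_symm_apply] at h1
  rw [P.comul_one]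
  refine Eq.trans ?_ h1
  generalize P.comul h = s
  induction s with
  | zero => simp
  | add x y hx hy => simp only [TensorProduct.add_tmul, map_add, hx, hy]
  | tmul a b => simp [twR_tmul, hn.2, P.mul_one]

theorem twR_one_left (P : HomBialg k H) (σ : H →ₗ[k] H →ₗ[k] k)
    (hn : IsNormal2Cocycle P σ) (h : H) :
    twR P σ (P.comul P.one ⊗ₜ P.comul h) = h := by
  have h1 := congrArg P.str (P.counit_comul_right h)
  rw [LinearEquiv.apply_symm_apply] at h1
  rw [P.comul_one]
  refine Eq.trans ?_ h1
  generalize P.comul h = s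
  induction s with
  | zero => simp
  | add x y hx hy => simp only [TensorProduct.tmul_add, map_add, hx, hy]
  | tmul a b => simp [twR_tmul, hn.1, P.one_mul]

/-- The twisted product as a bilinear map. -/
noncomputable def twMul (P : HomBialg k H) (σ : H →ₗ[k] H →ₗ[k] k) : H →ₗ[k] H →ₗ[k] H :=
  ((TensorProduct.mk k (H ⊗[k] H) (H ⊗[k] H)).compl₁₂ P.comul P.comul).compr₂
    (P.str.toLinearMap ∘ₗ twR P σ)

theorem twMul_apply (P : HomBialg k H) (σ : H →ₗ[k] H →ₗ[k] k) (h g : H) :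
    twMul P σ h g = P.str (twR P σ (P.comul h ⊗ₜ P.comul g)) := by
  simp [twMul]

end TwistHelpers

/-- If `σ` is a normal right monoidal Hom-2-cocycle on a monoidal
Hom-Hopf algebra `(H, β)`, then `H` with the twisted multiplication
`h ·_σ g = β(h₁ g₁) σ(h₂, g₂)` (and the same unit and structure map) is a monoidal
Hom-algebra, the right twist `H_σ`. -/
theorem right_twist_is_hom_algebra
    {k : Type*} [Field k] {H : Type*} [AddCommGroup H] [Module k H]
    (P : HomHopf k H) (σ : H →ₗ[k] H →ₗ[k] k)
    (hσ : IsRightHom2Cocycle P.toHomBialg σ)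
    (hnormal : IsNormal2Cocycle P.toHomBialg σ) :
    ∃ Q : HomAlg k H,
      Q.one = P.one ∧ Q.str = P.str ∧
      ∀ h g, Q.mul h g = rightTwistMul P.toHomBialg σ h g := by
  refine ⟨{ mul := twMul P.toHomBialg σ, one := P.one, str := P.str, hom_assoc := ?_,
            mul_one := ?_, one_mul := ?_, str_mul := ?_, str_one := P.str_one }, rfl, rfl, ?_⟩
  · intro a b c
    simp only [twMul_apply]
    rw [P.comul_str, P.comul_str, P.comul_str, P.comul_str,
      twR_str P.toHomBialg σ hσ.1, twR_str P.toHomBialg σ hσ.1,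
      comul_twR P.toHomBialg σ hσ.1, comul_twR P.toHomBialg σ hσ.1,
      ← P.hom_coassoc, ← P.hom_coassoc, ← P.hom_coassoc, twR_assoc P.toHomBialg σ hσ]
  · intro a
    rw [twMul_apply, twR_one_right _ _ hnormal]
  · intro a
    rw [twMul_apply, twR_one_left _ _ hnormal]
  · intro a b
    rw [twMul_apply, twMul_apply, P.comul_str, P.comul_str, twR_str P.toHomBialg σ hσ.1]
  · intro h g
    exact (twMul_apply _ _ h g).trans (rightTwistMul_eq _ _ h g).symm
end

section
/- Let (H, β) be a monoidal Hom-Hopf algebra. (1) If σ is a normal left monoidal Hom-2-cocycle on H, then the comultiplication Δ of H is an algebra homomorphism from the left twist _σH to _σH ⊗ H, and makes _σH a right (H, β)-Hom-comodule algebra. (2) If σ is a normal right monoidal Hom-2-cocycle on H, then Δ is an algebra homomorphism from the right twist H_σ to H ⊗ H_σ, and makes H_σ a left (H, β)-Hom-comodule algebra. -/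
open TensorProduct

section TwistHelpers

variable {k : Type*} [Field k] {H N : Type*} [AddCommGroup H] [Module k H]
  [AddCommGroup N] [Module k N]

/-- A choice of Sweedler representatives for the comultiplication. -/
def IsRep (P : HomBialg k H) (S : H → Finset (H × H)) : Prop :=
  ∀ a, P.comul a = ∑ p ∈ S a, p.1 ⊗ₜ[k] p.2

theorem exists_isRep (P : HomBialg k H) : ∃ S, IsRep P S := by
  choose S hS using fun a => TensorProduct.exists_finset (P.comul a)
  exact ⟨S, hS⟩

/-- bilinearity of a plain function -/
structure IsBil (k : Type*) [Field k] {H N : Type*} [AddCommGroup H] [Module k H]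
    [AddCommGroup N] [Module k N] (f : H → H → N) : Prop where
  h1 : ∀ x x' y, f (x + x') y = f x y + f x' y
  h2 : ∀ (c : k) x y, f (c • x) y = c • f x y
  h3 : ∀ x y y', f x (y + y') = f x y + f x y'
  h4 : ∀ (c : k) x y, f x (c • y) = c • f x y

theorem rep_lift {P : HomBialg k H} {S} (hS : IsRep P S) {f : H → H → N} (hf : IsBil k f) (a : H) :
    ∑ p ∈ S a, f p.1 p.2
      = TensorProduct.lift (LinearMap.mk₂ k f hf.h1 hf.h2 hf.h3 hf.h4) (P.comul a) := by
  simp [hS a]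

theorem rep_mul {P : HomBialg k H} {S} (hS : IsRep P S) {f : H → H → N} (hf : IsBil k f) (a b : H) :
    ∑ p ∈ S (P.mul a b), f p.1 p.2
      = ∑ p ∈ S a, ∑ q ∈ S b, f (P.mul p.1 q.1) (P.mul p.2 q.2) := by
  rw [rep_lift hS hf, P.comul_mul, hS a, hS b]
  simp [TensorProduct.sum_tmul, TensorProduct.tmul_sum]
  try rw [Finset.sum_comm]

theorem rep_str {P : HomBialg k H} {S} (hS : IsRep P S) {f : H → H → N} (hf : IsBil k f) (a : H) :
    ∑ p ∈ S (P.toHomAlg.str a), f p.1 p.2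
      = ∑ p ∈ S a, f (P.toHomAlg.str p.1) (P.toHomAlg.str p.2) := by
  rw [rep_lift hS hf, P.comul_str, hS a]
  simp

/-- trilinearity of a plain function -/
structure IsTril (k : Type*) [Field k] {H N : Type*} [AddCommGroup H] [Module k H]
    [AddCommGroup N] [Module k N] (f : H → H → H → N) : Prop where
  h1 : ∀ x x' y z, f (x + x') y z = f x y z + f x' y z
  h2 : ∀ (c : k) x y z, f (c • x) y z = c • f x y z
  h3 : ∀ x y y' z, f x (y + y') z = f x y z + f x y' z
  h4 : ∀ (c : k) x y z, f x (c • y) z = c • f x y z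
  h5 : ∀ x y z z', f x y (z + z') = f x y z + f x y z'
  h6 : ∀ (c : k) x y z, f x y (c • z) = c • f x y z

theorem IsTril.sum {ι : Type*} {s : Finset ι} {f : ι → H → H → H → N}
    (hf : ∀ i, IsTril k (f i)) : IsTril k (fun x y z => ∑ i ∈ s, f i x y z) := by
  constructor <;> intros <;>
    simp [fun i => (hf i).h1, fun i => (hf i).h2, fun i => (hf i).h3, fun i => (hf i).h4,
      fun i => (hf i).h5, fun i => (hf i).h6, Finset.sum_add_distrib, Finset.smul_sum]

theorem IsBil.sum {ι : Type*} {s : Finset ι} {f : ι → H → H → N}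
    (hf : ∀ i, IsBil k (f i)) : IsBil k (fun x y => ∑ i ∈ s, f i x y) := by
  constructor <;> intros <;>
    simp [fun i => (hf i).h1, fun i => (hf i).h2, fun i => (hf i).h3, fun i => (hf i).h4,
      Finset.sum_add_distrib, Finset.smul_sum]

theorem rep_coassoc {P : HomBialg k H} {S} (hS : IsRep P S) {f : H → H → H → N}
    (hf : IsTril k f) (a : H) :
    ∑ p ∈ S a, ∑ q ∈ S p.2, f p.1 q.1 q.2
      = ∑ p ∈ S a, ∑ q ∈ S p.1, f (P.str q.1) q.2 (P.str.symm p.2) := by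
  let F : H →ₗ[k] H ⊗[k] H →ₗ[k] N :=
    { toFun := fun x => TensorProduct.lift
        (LinearMap.mk₂ k (f x) (hf.h3 x) (fun c => hf.h4 c x) (hf.h5 x) (fun c => hf.h6 c x))
      map_add' := by intro x y; ext; simp [hf.h1]
      map_smul' := by intro x y; ext; simp [hf.h2] }
  have := congrArg (fun t => TensorProduct.lift (F ∘ₗ P.str.toLinearMap) t) (P.hom_coassoc a)
  have hS' : ∀ a, P.comul a = ∑ p ∈ S a, p.1 ⊗ₜ[k] p.2 := hS
  simp only [hS' a, map_sum, TensorProduct.map_tmul] at this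
  simpa [F, TensorProduct.sum_tmul, hS'] using this

theorem rep_coassoc₂ {P : HomBialg k H} {S} (hS : IsRep P S) {f : H → H → H → H → H → H → N}
    (hf : ∀ u v w, IsTril k (fun x y z => f x y z u v w))
    (hf' : ∀ x y z, IsTril k (fun u v w => f x y z u v w)) (a b : H) :
    ∑ p ∈ S a, ∑ q ∈ S b, ∑ r ∈ S p.2, ∑ s ∈ S q.2, f p.1 r.1 r.2 q.1 s.1 s.2
      = ∑ p ∈ S a, ∑ q ∈ S b, ∑ r ∈ S p.1, ∑ s ∈ S q.1,
        f (P.str r.1) r.2 (P.str.symm p.2) (P.str s.1) s.2 (P.str.symm q.2) := by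
  have e1 : ∀ x y z, ∑ q ∈ S b, ∑ s ∈ S q.2, f x y z q.1 s.1 s.2 
      = ∑ q ∈ S b, ∑ s ∈ S q.1, f x y z (P.str s.1) s.2 (P.str.symm q.2) :=
    fun x y z => rep_coassoc hS (hf' x y z) b
  calc _ = ∑ p ∈ S a, ∑ r ∈ S p.2, ∑ q ∈ S b, ∑ s ∈ S q.2, f p.1 r.1 r.2 q.1 s.1 s.2 :=
        Finset.sum_congr rfl fun p _ => Finset.sum_comm
    _ = ∑ p ∈ S a, ∑ r ∈ S p.2, ∑ q ∈ S b, ∑ s ∈ S q.1,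
          f p.1 r.1 r.2 (P.str s.1) s.2 (P.str.symm q.2) := by simp only [e1]
    _ = ∑ p ∈ S a, ∑ r ∈ S p.1, ∑ q ∈ S b, ∑ s ∈ S q.1,
          f (P.str r.1) r.2 (P.str.symm p.2) (P.str s.1) s.2 (P.str.symm q.2) :=
        rep_coassoc hS (f := fun x y z => ∑ q ∈ S b, ∑ s ∈ S q.1,
          f x y z (P.str s.1) s.2 (P.str.symm q.2))
          (IsTril.sum fun _ => IsTril.sum fun _ => hf _ _ _) a
    _ = _ := Finset.sum_congr rfl fun p _ => Finset.sum_comm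

theorem tw_eq {P : HomBialg k H} {S} (hS : IsRep P S) (σ : H →ₗ[k] H →ₗ[k] k) (a b : H) :
    leftTwistMul P σ a b = ∑ p ∈ S a, ∑ q ∈ S b, σ p.1 q.1 • P.str (P.mul p.2 q.2) := by
  simp only [leftTwistMul, hS a, hS b, TensorProduct.sum_tmul, TensorProduct.tmul_sum, map_sum]
  simp only [TensorProduct.tensorTensorTensorComm_tmul, TensorProduct.map_tmul]
  rw [Finset.sum_comm]
  simp

/-- bilinear version of `leftTwistMul` -/
noncomputable def twL (P : HomBialg k H) (σ : H →ₗ[k] H →ₗ[k] k) : H →ₗ[k] H →ₗ[k] H :=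
  LinearMap.mk₂ k (leftTwistMul P σ)
    (by intros; simp [leftTwistMul, TensorProduct.add_tmul])
    (by intros; simp [leftTwistMul, ← TensorProduct.smul_tmul'])
    (by intros; simp [leftTwistMul, TensorProduct.tmul_add])
    (by intros; simp [leftTwistMul])

theorem twL_eq {P : HomBialg k H} {S} (hS : IsRep P S) (σ : H →ₗ[k] H →ₗ[k] k) (a b : H) :
    twL P σ a b = ∑ p ∈ S a, ∑ q ∈ S b, σ p.1 q.1 • P.str (P.mul p.2 q.2) :=
  tw_eq hS σ a b

theorem twL_str (P : HomBialg k H) (σ : H →ₗ[k] H →ₗ[k] k)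
    (hσ : ∀ h g, σ (P.str h) (P.str g) = σ h g) (a b : H) :
    P.str (twL P σ a b) = twL P σ (P.str a) (P.str b) := by
  obtain ⟨S, hS⟩ := exists_isRep P
  rw [twL_eq hS, twL_eq hS]
  rw [rep_str hS (f := fun x y => ∑ q ∈ S (P.str b), σ x q.1 • P.str (P.mul y q.2))
    (IsBil.sum fun q => by constructor <;> intros <;> simp [add_smul, smul_smul, mul_comm])]
  simp only [map_sum]
  refine Finset.sum_congr rfl fun p _ => ?_
  rw [rep_str hS (f := fun x y => σ (P.str p.1) x • P.str (P.mul (P.str p.2) y))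
    (by constructor <;> intros <;> simp [add_smul, smul_smul, mul_comm])]
  simp [hσ, P.str_mul]

theorem twL_mul_left {P : HomBialg k H} {S} (hS : IsRep P S) (σ : H →ₗ[k] H →ₗ[k] k) (a b c : H) :
    twL P σ (P.mul a b) c = ∑ p ∈ S a, ∑ q ∈ S b, ∑ t ∈ S c,
      σ (P.mul p.1 q.1) t.1 • P.str (P.mul (P.mul p.2 q.2) t.2) := by
  rw [twL_eq hS]
  exact rep_mul hS (f := fun x y => ∑ t ∈ S c, σ x t.1 • P.str (P.mul y t.2))
    (IsBil.sum fun q => by constructor <;> intros <;> simp [add_smul, smul_smul, mul_comm]) a b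

theorem twL_mul_right {P : HomBialg k H} {S} (hS : IsRep P S) (σ : H →ₗ[k] H →ₗ[k] k) (a b c : H) :
    twL P σ a (P.mul b c) = ∑ q ∈ S b, ∑ t ∈ S c, ∑ p ∈ S a,
      σ p.1 (P.mul q.1 t.1) • P.str (P.mul p.2 (P.mul q.2 t.2)) := by
  rw [twL_eq hS, Finset.sum_comm]
  exact rep_mul hS (f := fun x y => ∑ p ∈ S a, σ p.1 x • P.str (P.mul p.2 y))
    (IsBil.sum fun q => by constructor <;> intros <;> simp [add_smul, smul_smul, mul_comm]) b c

theorem cocycle_rep {P : HomBialg k H} {S} (hS : IsRep P S) {σ : H →ₗ[k] H →ₗ[k] k}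
    (hσ : IsLeftHom2Cocycle P σ) (a b c : H) :
    ∑ p ∈ S a, ∑ q ∈ S b, σ p.1 q.1 * σ (P.mul p.2 q.2) c
      = ∑ q ∈ S b, ∑ t ∈ S c, σ q.1 t.1 * σ a (P.mul q.2 t.2) := by
  have := hσ.2 a b c
  simp only [hS a, hS b, hS c, TensorProduct.sum_tmul, TensorProduct.tmul_sum, map_sum] at this
  refine Finset.sum_comm.trans (Eq.trans ?_ Finset.sum_comm)
  simpa using this

theorem twL_assoc (P : HomBialg k H) (σ : H →ₗ[k] H →ₗ[k] k)
    (hσ : IsLeftHom2Cocycle P σ) (a b c : H) :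
    twL P σ (P.str a) (twL P σ b c) = twL P σ (twL P σ a b) (P.str c) := by
  obtain ⟨S, hS⟩ := exists_isRep P
  have hs := hσ.1
  have R : twL P σ (twL P σ a b) (P.str c) = ∑ p ∈ S a, ∑ q ∈ S b, ∑ t ∈ S c,
      (∑ r ∈ S p.1, ∑ s ∈ S q.1, σ r.1 s.1 * σ (P.mul r.2 s.2) t.1) •
        P.str (P.str (P.mul (P.mul (P.str.symm p.2) (P.str.symm q.2)) t.2)) := by
    rw [twL_eq hS σ a b]
    simp only [map_sum, map_smul, LinearMap.sum_apply, LinearMap.smul_apply, ← twL_str P σ hs,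
      twL_mul_left hS, Finset.smul_sum]
    refine (rep_coassoc₂ hS (f := fun x y z u v w => ∑ t ∈ S c, σ x u • σ (P.mul y v) t.1 •
      P.str (P.str (P.mul (P.mul z w) t.2))) ?_ ?_ a b).trans ?_
    · intro u v w
      refine IsTril.sum fun t => ?_
      constructor <;> intros <;> simp [add_smul, smul_smul, add_mul, mul_assoc, mul_comm, mul_left_comm]
    · intro u v w
      refine IsTril.sum fun t => ?_
      constructor <;> intros <;> simp [add_smul, smul_smul, add_mul, mul_assoc, mul_comm, mul_left_comm]
    · refine Finset.sum_congr rfl fun p _ => Finset.sum_congr rfl fun q _ => ?_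
      simp only [hs, smul_smul, Finset.sum_smul]
      exact (Finset.sum_congr rfl fun r _ => Finset.sum_comm).trans Finset.sum_comm
  have L : twL P σ (P.str a) (twL P σ b c) = ∑ q ∈ S b, ∑ t ∈ S c, ∑ p ∈ S a,
      (∑ s ∈ S q.1, ∑ r ∈ S t.1, σ s.1 r.1 * σ p.1 (P.mul s.2 r.2)) •
        P.str (P.str (P.mul p.2 (P.mul (P.str.symm q.2) (P.str.symm t.2)))) := by
    rw [twL_eq hS σ b c]
    simp only [map_sum, map_smul, ← twL_str P σ hs,
      twL_mul_right hS, Finset.smul_sum]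
    refine (rep_coassoc₂ hS (f := fun x y z u v w => ∑ p ∈ S a, σ x u • σ p.1 (P.mul y v) •
      P.str (P.str (P.mul p.2 (P.mul z w)))) ?_ ?_ b c).trans ?_
    · intro u v w
      refine IsTril.sum fun t => ?_
      constructor <;> intros <;> simp [add_smul, smul_smul, add_mul, mul_assoc, mul_comm, mul_left_comm]
    · intro u v w
      refine IsTril.sum fun t => ?_
      constructor <;> intros <;> simp [add_smul, smul_smul, add_mul, mul_assoc, mul_comm, mul_left_comm]
    · refine Finset.sum_congr rfl fun p _ => Finset.sum_congr rfl fun q _ => ?_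
      simp only [hs, smul_smul, Finset.sum_smul]
      exact (Finset.sum_congr rfl fun r _ => Finset.sum_comm).trans Finset.sum_comm
  rw [L, R]
  simp only [cocycle_rep hS hσ]
  have e : ∀ x y z, P.mul (P.mul (P.str.symm x) (P.str.symm y)) z
      = P.mul x (P.mul (P.str.symm y) (P.str.symm z)) := by
    intro x y z
    have := P.hom_assoc (P.str.symm x) (P.str.symm y) (P.str.symm z)
    simpa using this.symm
  simp only [e]
  refine Eq.trans ?_ Finset.sum_comm
  refine Finset.sum_congr rfl fun q _ => Finset.sum_comm

theorem left_part (P : HomBialg k H) (σ : H →ₗ[k] H →ₗ[k] k)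
    (hσ : IsLeftHom2Cocycle P σ) (hn : IsNormal2Cocycle P σ) :
    ∃ Q : HomAlg k H, Q.one = P.one ∧ Q.str = P.str ∧
        (∀ h g, Q.mul h g = leftTwistMul P σ h g) ∧
        IsRightHomComoduleAlg P Q P.comul := by
  obtain ⟨S, hS⟩ := exists_isRep P
  refine ⟨⟨twL P σ, P.one, P.str, twL_assoc P σ hσ, ?_, ?_, twL_str P σ hσ.1, P.str_one⟩,
    rfl, rfl, fun _ _ => rfl, ⟨P.hom_coassoc, P.comul_str, P.counit_comul_right⟩, ?_, P.comul_one⟩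
  · intro a
    have := P.counit_comul_left a
    change leftTwistMul P σ a P.one = _
    simp only [leftTwistMul, P.comul_one, hS a, TensorProduct.sum_tmul, map_sum] at this ⊢
    simp only [TensorProduct.map_tmul, TensorProduct.lid_tmul] at this
    simp [hn.2, P.mul_one, ← map_smul, ← map_sum]
    simpa using congrArg (fun x => P.str x) this
  · intro a
    have := P.counit_comul_left a
    change leftTwistMul P σ P.one a = _
    simp only [leftTwistMul, P.comul_one, hS a, TensorProduct.tmul_sum, map_sum] at this ⊢
    simp only [TensorProduct.map_tmul, TensorProduct.lid_tmul] at this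
    simp [hn.1, P.one_mul, ← map_smul, ← map_sum]
    simpa using congrArg (fun x => P.str x) this
  · intro a b
    change P.comul (twL P σ a b) = TensorProduct.map (TensorProduct.lift (twL P σ)) _ _
    have hS' : ∀ a, P.comul a = ∑ p ∈ S a, p.1 ⊗ₜ[k] p.2 := hS
    have eR : TensorProduct.map (TensorProduct.lift (twL P σ)) (TensorProduct.lift P.mul)
        (TensorProduct.tensorTensorTensorComm k H H H H (P.comul a ⊗ₜ[k] P.comul b))
        = ∑ p ∈ S a, ∑ q ∈ S b, ∑ r ∈ S p.1, ∑ s ∈ S q.1,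
          σ r.1 s.1 • (P.str (P.mul r.2 s.2) ⊗ₜ[k] P.mul p.2 q.2) := by
      rw [hS a, hS b]
      simp only [TensorProduct.sum_tmul, TensorProduct.tmul_sum, map_sum]
      simp [twL_eq hS, TensorProduct.sum_tmul, TensorProduct.smul_tmul']
      try rw [Finset.sum_comm]
    have eL : P.comul (twL P σ a b) = ∑ p ∈ S a, ∑ q ∈ S b, ∑ r ∈ S p.2, ∑ s ∈ S q.2,
          σ p.1 q.1 • (P.str (P.mul r.1 s.1) ⊗ₜ[k] P.str (P.mul r.2 s.2)) := by
      rw [twL_eq hS]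
      simp only [map_sum, map_smul, P.comul_str, P.comul_mul]
      refine Finset.sum_congr rfl fun p _ => Finset.sum_congr rfl fun q _ => ?_
      rw [hS p.2, hS q.2]
      simp only [TensorProduct.sum_tmul, TensorProduct.tmul_sum, map_sum]
      simp [Finset.smul_sum]
      try rw [Finset.sum_comm]
    refine eL.trans (Eq.trans ?_ eR.symm)
    refine (rep_coassoc₂ hS (f := fun x y z u v w => 
      σ x u • (P.str (P.mul y v) ⊗ₜ[k] P.str (P.mul z w))) ?_ ?_ a b).trans ?_
    · intro u v w
      constructor <;> intros <;> simp [add_smul, smul_smul, mul_comm, TensorProduct.add_tmul,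
        TensorProduct.tmul_add, TensorProduct.smul_tmul', smul_add]
    · intro u v w
      constructor <;> intros <;> simp [add_smul, smul_smul, mul_comm, TensorProduct.add_tmul,
        TensorProduct.tmul_add, TensorProduct.smul_tmul', smul_add]
    · simp [hσ.1, P.str_mul]

/-- the co-opposite bialgebra -/
noncomputable def cop (P : HomBialg k H) : HomBialg k H where
  toHomAlg := P.toHomAlg
  comul := (TensorProduct.comm k H H).toLinearMap ∘ₗ P.comul
  counit := P.counit
  hom_coassoc := by
    intro c
    obtain ⟨S, hS⟩ := exists_isRep P
    have hS' : ∀ a, P.comul a = ∑ p ∈ S a, p.1 ⊗ₜ[k] p.2 := hS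
    have := rep_coassoc hS (f := fun x y z => z ⊗ₜ[k] (y ⊗ₜ[k] P.str.symm x))
      (by constructor <;> intros <;> simp [TensorProduct.add_tmul,
        TensorProduct.tmul_add, ← TensorProduct.smul_tmul']) c
    simp [hS', TensorProduct.sum_tmul, TensorProduct.tmul_sum] at this ⊢
    exact this.symm
  counit_comul_right := by
    intro c
    obtain ⟨S, hS⟩ := exists_isRep P
    have := P.counit_comul_left c
    simpa [hS c] using this
  counit_comul_left := by
    intro c
    obtain ⟨S, hS⟩ := exists_isRep P
    have := P.counit_comul_right c
    simpa [hS c] using this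
  comul_str := by
    intro c
    obtain ⟨S, hS⟩ := exists_isRep P
    simp [P.comul_str, hS c]
  counit_str := P.counit_str
  comul_mul := by
    intro a b
    obtain ⟨S, hS⟩ := exists_isRep P
    simp [P.comul_mul, hS a, hS b, TensorProduct.sum_tmul, TensorProduct.tmul_sum]
  comul_one := by simp [P.comul_one]
  counit_mul := P.counit_mul
  counit_one := P.counit_one

theorem leftTwist_cop (P : HomBialg k H) (σ : H →ₗ[k] H →ₗ[k] k) (a b : H) :
    leftTwistMul (cop P) σ a b = rightTwistMul P σ a b := by
  obtain ⟨S, hS⟩ := exists_isRep P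
  simp [leftTwistMul, rightTwistMul, cop, hS a, hS b, TensorProduct.sum_tmul,
    TensorProduct.tmul_sum]

theorem cocycle_cop {P : HomBialg k H} {σ : H →ₗ[k] H →ₗ[k] k}
    (hσ : IsRightHom2Cocycle P σ) : IsLeftHom2Cocycle (cop P) σ := by
  refine ⟨hσ.1, fun a b c => ?_⟩
  obtain ⟨S, hS⟩ := exists_isRep P
  have := hσ.2 a b c
  simp [hS a, hS b, hS c, TensorProduct.sum_tmul, TensorProduct.tmul_sum, cop, mul_comm] at this ⊢
  exact this

theorem right_part (P : HomBialg k H) (σ : H →ₗ[k] H →ₗ[k] k)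
    (hσ : IsRightHom2Cocycle P σ) (hn : IsNormal2Cocycle P σ) :
    ∃ Q : HomAlg k H, Q.one = P.one ∧ Q.str = P.str ∧
        (∀ h g, Q.mul h g = rightTwistMul P σ h g) ∧
        IsLeftHomComoduleAlg P Q P.comul := by
  obtain ⟨Q, h1, h2, h3, -, h5, h6⟩ := left_part (cop P) σ (cocycle_cop hσ) hn
  change Q.one = P.one at h1
  change Q.str = P.str at h2
  refine ⟨Q, h1, h2, fun a b => (h3 a b).trans (leftTwist_cop P σ a b), ⟨?_, ?_, ?_⟩, ?_, ?_⟩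
  · rw [h2]; exact P.hom_coassoc
  · rw [h2]; exact P.comul_str
  · rw [h2]; exact P.counit_comul_left
  · intro a b
    obtain ⟨S, hS⟩ := exists_isRep P
    have := congrArg (TensorProduct.comm k H H) (h5 a b)
    simp only [cop, LinearMap.comp_apply, LinearEquiv.coe_coe, TensorProduct.comm_comm] at this
    refine this.trans ?_
    simp [hS a, hS b, TensorProduct.sum_tmul, TensorProduct.tmul_sum]
  · rw [h1]; exact P.comul_one

end TwistHelpers

/-- Let `(H, β)` be a monoidal Hom-Hopf algebra.
(1) If `σ` is a normal left monoidal Hom-2-cocycle, the comultiplication `Δ` of `H`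
is an algebra homomorphism from the left twist `_σH` to `_σH ⊗ H`, making `_σH` a
right `(H, β)`-Hom-comodule algebra.
(2) If `σ` is a normal right monoidal Hom-2-cocycle, `Δ` is an algebra homomorphism
from the right twist `H_σ` to `H ⊗ H_σ`, making `H_σ` a left `(H, β)`-Hom-comodule
algebra. -/
theorem twist_comul_comodule_algebra
    {k : Type*} [Field k] {H : Type*} [AddCommGroup H] [Module k H]
    (P : HomHopf k H) (σ : H →ₗ[k] H →ₗ[k] k) :
    (IsLeftHom2Cocycle P.toHomBialg σ ∧ IsNormal2Cocycle P.toHomBialg σ →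
      ∃ Q : HomAlg k H,
        Q.one = P.one ∧ Q.str = P.str ∧
        (∀ h g, Q.mul h g = leftTwistMul P.toHomBialg σ h g) ∧
        IsRightHomComoduleAlg P.toHomBialg Q P.comul) ∧
    (IsRightHom2Cocycle P.toHomBialg σ ∧ IsNormal2Cocycle P.toHomBialg σ →
      ∃ Q : HomAlg k H,
        Q.one = P.one ∧ Q.str = P.str ∧
        (∀ h g, Q.mul h g = rightTwistMul P.toHomBialg σ h g) ∧
        IsLeftHomComoduleAlg P.toHomBialg Q P.comul) := by
  exact ⟨fun h => left_part P.toHomBialg σ h.1 h.2, fun h => right_part P.toHomBialg σ h.1 h.2⟩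
end
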